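/- arXiv:2504.19140 — 7 statements merged into one kernel-verified Lean document; each statement's English description precedes it below -/
import Mathlib

section
/- Let x̂ ∈ ℂⁿ and ρ̂ : {−2B,…,2B} → ℂ. For every φ ∈ ℝ, define x̂′[k] = x̂[k]·e^{ιkφ} for k ∈ {−B,…,B} and ρ̂′[k] = ρ̂[k]·e^{−ιkφ} for k ∈ {−2B,…,2B}. Then the pair (x̂′, ρ̂′) produces the same first two moments as (x̂, ρ̂): x̂′[k]·ρ̂′[k] = x̂[k]·ρ̂[k] for all k ∈ {−B,…,B}, and x̂′[k₁]·conj(x̂′[k₂])·ρ̂′[k₁−k₂] = x̂[k₁]·conj(x̂[k₂])·ρ̂[k₁−k₂] for all k₁, k₂ ∈ {−B,…,B}. -/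
open Complex ComplexConjugate

/-!
Modulation of a function on `ℤ` by `k ↦ e^{ιkφ}` is multiplication by a unitary character `χ`, and
the argument works for a unitary character of any abelian group. The first moment picks up the
factor `χ(k) χ⁻¹(k) = 1`. Since `conj (χ(k₂)) = χ(-k₂)`, the second moment picks up
`χ(k₁) χ(-k₂) χ⁻¹(k₁ - k₂) = 1`.
-/

section Modulation

variable {G : Type*} [AddCommGroup G]

/-- The modulation of `f` by the unitary character `χ`. For Fourier coefficients this is a rotation
of the underlying function, and modulation by `χ⁻¹` is the opposite rotation. -/
noncomputable def modulate (χ : AddChar G Circle) (f : G → ℂ) (k : G) : ℂ :=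
  f k * χ k

theorem modulate_mul_modulate_inv (χ : AddChar G Circle) (x ρ : G → ℂ) (k : G) :
    modulate χ x k * modulate χ⁻¹ ρ k = x k * ρ k := by
  have phases_cancel : (χ k : ℂ) * (χ⁻¹ k : Circle) = 1 := by
    rw [AddChar.inv_apply', ← Circle.coe_mul, mul_inv_cancel, Circle.coe_one]
  simp only [modulate]
  linear_combination x k * ρ k * phases_cancel

theorem modulate_mul_conj_modulate_mul_modulate_inv_sub (χ : AddChar G Circle) (x ρ : G → ℂ)
    (k₁ k₂ : G) :
    modulate χ x k₁ * conj (modulate χ x k₂) * modulate χ⁻¹ ρ (k₁ - k₂) =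
      x k₁ * conj (x k₂) * ρ (k₁ - k₂) := by
  have phases_cancel : (χ k₁ : ℂ) * conj (χ k₂ : ℂ) * (χ⁻¹ (k₁ - k₂) : Circle) = 1 := by
    rw [← Circle.coe_inv_eq_conj, ← Circle.coe_mul, ← Circle.coe_mul, AddChar.inv_apply',
      AddChar.map_sub_eq_div, div_eq_mul_inv, mul_inv_cancel, Circle.coe_one]
  simp only [modulate, map_mul]
  linear_combination x k₁ * conj (x k₂) * ρ (k₁ - k₂) * phases_cancel

theorem stmt_1_general (χ : AddChar G Circle) {S T : Set G} (hST : S ⊆ T)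
    (hsub : ∀ k₁ ∈ S, ∀ k₂ ∈ S, k₁ - k₂ ∈ T) {x ρ x' ρ' : G → ℂ}
    (hx' : Set.EqOn x' (modulate χ x) S) (hρ' : Set.EqOn ρ' (modulate χ⁻¹ ρ) T) :
    (∀ k ∈ S, x' k * ρ' k = x k * ρ k) ∧
    (∀ k₁ ∈ S, ∀ k₂ ∈ S,
      x' k₁ * conj (x' k₂) * ρ' (k₁ - k₂) = x k₁ * conj (x k₂) * ρ (k₁ - k₂)) := by
  refine ⟨fun k hk ↦ ?_, fun k₁ h₁ k₂ h₂ ↦ ?_⟩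
  · rw [hx' hk, hρ' (hST hk), modulate_mul_modulate_inv]
  · rw [hx' h₁, hx' h₂, hρ' (hsub k₁ h₁ k₂ h₂), modulate_mul_conj_modulate_mul_modulate_inv_sub]

end Modulation

/-- The unitary character `k ↦ e^{ιkφ}` of `ℤ`, by which a rotation by the angle `φ` modulates
Fourier coefficients. -/
noncomputable def rotationChar (φ : ℝ) : AddChar ℤ Circle where
  toFun k := Circle.exp (k * φ)
  map_zero_eq_one' := by simp
  map_add_eq_mul' k l := by rw [Int.cast_add, add_mul, Circle.exp_add]

theorem coe_rotationChar (φ : ℝ) (k : ℤ) : (rotationChar φ k : ℂ) = exp (I * k * φ) := by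
  change (Circle.exp (k * φ) : ℂ) = _
  rw [Circle.coe_exp]
  push_cast
  ring_nf

theorem coe_inv_rotationChar (φ : ℝ) (k : ℤ) :
    (((rotationChar φ)⁻¹ k : Circle) : ℂ) = exp (-I * k * φ) := by
  rw [AddChar.inv_apply', Circle.coe_inv, coe_rotationChar, ← exp_neg, neg_mul, neg_mul]

/-- a global rotation of the signal together with the opposite rotation of the
distribution produces the same first two moments. -/
theorem stmt_1 (B : ℕ) (hB : 1 ≤ B)
    (xhat rhohat : ℤ → ℂ) (φ : ℝ)
    (xhat' rhohat' : ℤ → ℂ)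
    (hx' : ∀ k ∈ Finset.Icc (-(B : ℤ)) (B : ℤ),
      xhat' k = xhat k * Complex.exp (Complex.I * (k : ℂ) * (φ : ℂ)))
    (hρ' : ∀ k ∈ Finset.Icc (-(2 * B : ℤ)) (2 * B : ℤ),
      rhohat' k = rhohat k * Complex.exp (-Complex.I * (k : ℂ) * (φ : ℂ))) :
    (∀ k ∈ Finset.Icc (-(B : ℤ)) (B : ℤ), xhat' k * rhohat' k = xhat k * rhohat k) ∧
    (∀ k₁ ∈ Finset.Icc (-(B : ℤ)) (B : ℤ), ∀ k₂ ∈ Finset.Icc (-(B : ℤ)) (B : ℤ),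
      xhat' k₁ * conj (xhat' k₂) * rhohat' (k₁ - k₂) =
        xhat k₁ * conj (xhat k₂) * rhohat (k₁ - k₂)) := by
  simp only [← coe_rotationChar, ← coe_inv_rotationChar, ← Finset.mem_coe] at hx' hρ' ⊢
  refine stmt_1_general (rotationChar φ) ?_ ?_ hx' hρ' <;> grind
end

section
/- Let x̂, x̂′ ∈ ℂⁿ be non-vanishing and let ρ̂, ρ̂′ : {−2B,…,2B} → ℂ be non-vanishing with ρ̂[0] = ρ̂′[0] = 1/(2π) and conjugate symmetry ρ̂[−k] = conj(ρ̂[k]) and ρ̂′[−k] = conj(ρ̂′[k]) for all k. Suppose the two pairs produce the same first two moments: x̂[k]·ρ̂[k] = x̂′[k]·ρ̂′[k] for all k ∈ {−B,…,B}, and x̂[k₁]·conj(x̂[k₂])·ρ̂[k₁−k₂] = x̂′[k₁]·conj(x̂′[k₂])·ρ̂′[k₁−k₂] for all k₁, k₂ ∈ {−B,…,B}. Then there exists a complex number u with |u| = 1 such that ρ̂′[k] = ρ̂[k]·u^k for all k ∈ {−2B,…,2B} and x̂′[k] = x̂[k]·u^{−k} for all k ∈ {−B,…,B}; that is, the signal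 and the distribution are determined up to a global rotation. -/
/-!
Let `r = ρ' / ρ`. The first moments give `x = x' * r` on `{-B, …, B}`; substituting this into the
second moments leaves `r a * conj (r b) = r (a - b)` there. Since `r 0 ≠ 0`, taking `a = b = 0`
forces `r 0 = 1`, and then `a = b` shows that each `r b` is unitary. So `r (a - b) = r a / r b`,
which gives `r k = u ^ k` with `u = r 1`, first on `{-B, …, B}` and then on its difference set
`{-2B, …, 2B}`.
-/

open Complex Real ComplexConjugate

section PartialHom

variable {G₀ : Type*} [GroupWithZero G₀] {B : ℕ} {f : ℤ → G₀}

theorem eq_zpow_of_map_sub_of_mem_Icc (h0 : f 0 = 1)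
    (hsub : ∀ a ∈ Finset.Icc (-(B : ℤ)) B, ∀ b ∈ Finset.Icc (-(B : ℤ)) B, f (a - b) = f a / f b)
    {k : ℤ} (hk : k ∈ Finset.Icc (-(B : ℤ)) B) : f k = f 1 ^ k := by
  simp only [Finset.mem_Icc] at hsub hk
  have hneg (a : ℤ) (ha : -(B : ℤ) ≤ a ∧ a ≤ B) : f (-a) = (f a)⁻¹ := by
    rw [← zero_sub, hsub 0 (by omega) a ha, h0, one_div]
  have hnat (n : ℕ) (hn : n ≤ B) : f n = f 1 ^ n := by
    induction n with
    | zero => simpa using h0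
    | succ n ih =>
      calc f (n + 1 : ℕ) = f (n - -1) := by rw [sub_neg_eq_add, Nat.cast_succ]
        _ = f n / f (-1) := hsub n (by omega) (-1) (by omega)
        _ = f 1 ^ (n + 1) := by
          rw [hneg 1 (by omega), div_inv_eq_mul, ih (by omega), pow_succ]
  obtain ⟨n, rfl | rfl⟩ := k.eq_nat_or_neg
  · rw [hnat n (by omega), zpow_natCast]
  · rw [hneg n (by omega), hnat n (by omega), zpow_neg, zpow_natCast]

theorem eq_zpow_of_map_sub_of_mem_Icc_two_mul (hB : 1 ≤ B) (h0 : f 0 = 1)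
    (hsub : ∀ a ∈ Finset.Icc (-(B : ℤ)) B, ∀ b ∈ Finset.Icc (-(B : ℤ)) B, f (a - b) = f a / f b)
    {k : ℤ} (hk : k ∈ Finset.Icc (-(2 * B : ℤ)) (2 * B)) : f k = f 1 ^ k := by
  have hone : (1 : ℤ) ∈ Finset.Icc (-(B : ℤ)) B := by rw [Finset.mem_Icc]; omega
  have hf1 : f 1 ≠ 0 := by
    intro hf1
    have := hsub 1 hone 1 hone
    simp [h0, hf1] at this
  obtain ⟨a, ha, b, hb, rfl⟩ : ∃ a ∈ Finset.Icc (-(B : ℤ)) B,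
      ∃ b ∈ Finset.Icc (-(B : ℤ)) B, k = a - b := by
    simp only [Finset.mem_Icc] at hk ⊢
    exact ⟨k / 2, by omega, k / 2 - k, by omega, by omega⟩
  rw [hsub a ha b hb, eq_zpow_of_map_sub_of_mem_Icc h0 hsub ha,
    eq_zpow_of_map_sub_of_mem_Icc h0 hsub hb, zpow_sub₀ hf1]

end PartialHom

theorem mem_unitary_and_eq_zpow_of_mul_conj {K : Type*} [Field K] [StarRing K] {B : ℕ}
    (hB : 1 ≤ B) {f : ℤ → K} (hf0 : f 0 ≠ 0)
    (hmul : ∀ a ∈ Finset.Icc (-(B : ℤ)) B, ∀ b ∈ Finset.Icc (-(B : ℤ)) B,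
      f a * conj (f b) = f (a - b)) :
    f 1 ∈ unitary K ∧ ∀ k ∈ Finset.Icc (-(2 * B : ℤ)) (2 * B), f k = f 1 ^ k := by
  have hf0_eq : f 0 = 1 := by
    have hzero : (0 : ℤ) ∈ Finset.Icc (-(B : ℤ)) B := by rw [Finset.mem_Icc]; omega
    have hself : f 0 * conj (f 0) = f 0 := hmul 0 hzero 0 hzero
    have hconj : conj (f 0) = 1 := mul_left_cancel₀ hf0 (hself.trans (mul_one _).symm)
    simpa using congrArg conj hconj
  have hunit (b : ℤ) (hb : b ∈ Finset.Icc (-(B : ℤ)) B) : f b * conj (f b) = 1 := by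
    rw [hmul b hb b hb, sub_self, hf0_eq]
  have hsub : ∀ a ∈ Finset.Icc (-(B : ℤ)) B, ∀ b ∈ Finset.Icc (-(B : ℤ)) B,
      f (a - b) = f a / f b := by
    intro a ha b hb
    rw [← hmul a ha b hb, eq_inv_of_mul_eq_one_right (hunit b hb), div_eq_mul_inv]
  refine ⟨Unitary.mem_iff_self_mul_star.2 (hunit 1 ?_), fun k hk ↦ ?_⟩
  · rw [Finset.mem_Icc]; omega
  · exact eq_zpow_of_map_sub_of_mem_Icc_two_mul hB hf0_eq hsub hk

section Moments

variable {K : Type*} [Field K] [StarRing K] {B : ℕ} {x x' ρ ρ' : ℤ → K}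

/-- The pairs `(x, ρ)` and `(x', ρ')` of signal and distribution coefficients have the same first
and second moments at bandlimit `B`. The coefficients are functions on all of `ℤ`, of which only
the values of `x, x'` on `{-B, …, B}` and of `ρ, ρ'` on `{-2B, …, 2B}` matter. -/
structure SameMoments (B : ℕ) (x ρ x' ρ' : ℤ → K) : Prop where
  first : ∀ k ∈ Finset.Icc (-(B : ℤ)) B, x k * ρ k = x' k * ρ' k
  second : ∀ a ∈ Finset.Icc (-(B : ℤ)) B, ∀ b ∈ Finset.Icc (-(B : ℤ)) B,
    x a * conj (x b) * ρ (a - b) = x' a * conj (x' b) * ρ' (a - b)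

namespace SameMoments

theorem signal_mul_distribution_ne_zero (h : SameMoments B x ρ x' ρ') {k : ℤ}
    (hk : k ∈ Finset.Icc (-(B : ℤ)) B) (hx : x k ≠ 0) (hρ : ρ k ≠ 0) : x' k * ρ' k ≠ 0 :=
  h.first k hk ▸ mul_ne_zero hx hρ

theorem signal_eq_mul_div (h : SameMoments B x ρ x' ρ') {k : ℤ} (hk : k ∈ Finset.Icc (-(B : ℤ)) B)
    (hρ : ρ k ≠ 0) : x k = x' k * (ρ' / ρ) k := by
  rw [Pi.div_apply, ← mul_div_assoc]
  exact eq_div_of_mul_eq hρ (h.first k hk)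

theorem div_mul_conj_div (h : SameMoments B x ρ x' ρ')
    (hx' : ∀ k ∈ Finset.Icc (-(B : ℤ)) B, x' k ≠ 0)
    (hρ : ∀ k ∈ Finset.Icc (-(2 * B : ℤ)) (2 * B), ρ k ≠ 0)
    {a b : ℤ} (ha : a ∈ Finset.Icc (-(B : ℤ)) B) (hb : b ∈ Finset.Icc (-(B : ℤ)) B) :
    (ρ' / ρ) a * conj ((ρ' / ρ) b) = (ρ' / ρ) (a - b) := by
  have hρa : ρ a ≠ 0 := hρ a (by rw [Finset.mem_Icc] at *; omega)
  have hρb : ρ b ≠ 0 := hρ b (by rw [Finset.mem_Icc] at *; omega)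
  have hρab : ρ (a - b) ≠ 0 := hρ _ (by rw [Finset.mem_Icc] at *; omega)
  have hx'ab : x' a * conj (x' b) ≠ 0 :=
    mul_ne_zero (hx' a ha) ((map_ne_zero _).2 (hx' b hb))
  have hsecond := h.second a ha b hb
  rw [h.signal_eq_mul_div ha hρa, h.signal_eq_mul_div hb hρb, map_mul] at hsecond
  refine eq_div_of_mul_eq hρab (mul_left_cancel₀ hx'ab ?_)
  linear_combination hsecond

end SameMoments

theorem stmt_2_general (hB : 1 ≤ B) (h : SameMoments B x ρ x' ρ')
    (hx : ∀ k ∈ Finset.Icc (-(B : ℤ)) B, x k ≠ 0)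
    (hρ : ∀ k ∈ Finset.Icc (-(2 * B : ℤ)) (2 * B), ρ k ≠ 0) :
    ∃ u ∈ unitary K,
      (∀ k ∈ Finset.Icc (-(2 * B : ℤ)) (2 * B), ρ' k = ρ k * u ^ k) ∧
      (∀ k ∈ Finset.Icc (-(B : ℤ)) B, x' k = x k * u ^ (-k)) := by
  have hsubset : Finset.Icc (-(B : ℤ)) B ⊆ Finset.Icc (-(2 * B : ℤ)) (2 * B) :=
    Finset.Icc_subset_Icc (by omega) (by omega)
  have hzero : (0 : ℤ) ∈ Finset.Icc (-(B : ℤ)) B := by rw [Finset.mem_Icc]; omega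
  have hne (k : ℤ) (hk : k ∈ Finset.Icc (-(B : ℤ)) B) : x' k * ρ' k ≠ 0 :=
    h.signal_mul_distribution_ne_zero hk (hx k hk) (hρ k (hsubset hk))
  have hratio (k : ℤ) (hk : k ∈ Finset.Icc (-(B : ℤ)) B) : (ρ' / ρ) k ≠ 0 :=
    div_ne_zero (right_ne_zero_of_mul (hne k hk)) (hρ k (hsubset hk))
  obtain ⟨hu, hpow⟩ := mem_unitary_and_eq_zpow_of_mul_conj hB (hratio 0 hzero) fun a ha b hb ↦
    h.div_mul_conj_div (fun k hk ↦ left_ne_zero_of_mul (hne k hk)) hρ ha hb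
  refine ⟨(ρ' / ρ) 1, hu, fun k hk ↦ ?_, fun k hk ↦ ?_⟩
  · rw [← hpow k hk, Pi.div_apply, mul_div_cancel₀ _ (hρ k hk)]
  · rw [zpow_neg, ← hpow k (hsubset hk), h.signal_eq_mul_div hk (hρ k (hsubset hk)),
      mul_inv_cancel_right₀ (hratio k hk)]

end Moments

/-- uniqueness, up to a global rotation, of a non-vanishing signal and
non-vanishing distribution from the first two moments (1-D case). -/
theorem stmt_2 (B : ℕ) (hB : 1 ≤ B)
    (xhat xhat' : ℤ → ℂ) (rhohat rhohat' : ℤ → ℂ)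
    (hxnv : ∀ k ∈ Finset.Icc (-(B : ℤ)) (B : ℤ), xhat k ≠ 0)
    (hxnv' : ∀ k ∈ Finset.Icc (-(B : ℤ)) (B : ℤ), xhat' k ≠ 0)
    (hρnv : ∀ k ∈ Finset.Icc (-(2 * B : ℤ)) (2 * B : ℤ), rhohat k ≠ 0)
    (hρnv' : ∀ k ∈ Finset.Icc (-(2 * B : ℤ)) (2 * B : ℤ), rhohat' k ≠ 0)
    (hρ0 : rhohat 0 = 1 / (2 * π))
    (hρ0' : rhohat' 0 = 1 / (2 * π))
    (hρsym : ∀ k ∈ Finset.Icc (-(2 * B : ℤ)) (2 * B : ℤ), rhohat (-k) = conj (rhohat k))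
    (hρsym' : ∀ k ∈ Finset.Icc (-(2 * B : ℤ)) (2 * B : ℤ), rhohat' (-k) = conj (rhohat' k))
    (hM1 : ∀ k ∈ Finset.Icc (-(B : ℤ)) (B : ℤ), xhat k * rhohat k = xhat' k * rhohat' k)
    (hM2 : ∀ k₁ ∈ Finset.Icc (-(B : ℤ)) (B : ℤ), ∀ k₂ ∈ Finset.Icc (-(B : ℤ)) (B : ℤ),
      xhat k₁ * conj (xhat k₂) * rhohat (k₁ - k₂) =
        xhat' k₁ * conj (xhat' k₂) * rhohat' (k₁ - k₂)) :
    ∃ u : ℂ, ‖u‖ = 1 ∧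
      (∀ k ∈ Finset.Icc (-(2 * B : ℤ)) (2 * B : ℤ), rhohat' k = rhohat k * u ^ k) ∧
      (∀ k ∈ Finset.Icc (-(B : ℤ)) (B : ℤ), xhat' k = xhat k * u ^ (-k)) := by
  obtain ⟨u, hu, hρu, hxu⟩ := stmt_2_general hB ⟨hM1, hM2⟩ hxnv hρnv
  exact ⟨u, CStarRing.norm_of_mem_unitary hu, hρu, hxu⟩
end

section
/- Let ρ̂ : {−2B,…,2B} → ℂ. Then for every v ∈ ℂⁿ, ‖T_ρ − C_{v_opt}‖_F² ≤ ‖T_ρ − C_v‖_F², and the minimal value is ‖T_ρ − C_{v_opt}‖_F² = S_B(ρ̂). -/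
open Complex ComplexConjugate

/-- The Toeplitz matrix `T_ρ[k₁,k₂] = ρ̂[k₁ - k₂]`, with indices `k = i - B ∈ {-B,…,B}`
for `i : Fin (2B+1)`. -/
noncomputable def Tmat (B : ℕ) (rhohat : ℤ → ℂ) :
    Matrix (Fin (2 * B + 1)) (Fin (2 * B + 1)) ℂ :=
  Matrix.of fun i j => rhohat (((i : ℕ) : ℤ) - ((j : ℕ) : ℤ))

/-- The circulant matrix `C_v[k₁,k₂] = v[(k₁ - k₂) mod n]`, `n = 2B+1`. -/
noncomputable def Cmat (B : ℕ) (v : Fin (2 * B + 1) → ℂ) :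
    Matrix (Fin (2 * B + 1)) (Fin (2 * B + 1)) ℂ :=
  Matrix.of fun i j => v (i - j)

/-- `v_opt[k] = (k·ρ̂[-(n-k)] + (n-k)·ρ̂[k]) / n`, `n = 2B+1`. -/
noncomputable def vopt (B : ℕ) (rhohat : ℤ → ℂ) : Fin (2 * B + 1) → ℂ :=
  fun k => ((((k : ℕ) : ℤ) : ℂ) * rhohat (-((2 * B + 1 : ℤ) - ((k : ℕ) : ℤ))) +
      (((2 * B + 1 : ℤ) - ((k : ℕ) : ℤ) : ℤ) : ℂ) * rhohat ((k : ℕ) : ℤ)) /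
    ((2 * B + 1 : ℕ) : ℂ)

/-- `S_B(ρ̂) = Σ_{k=1}^{n-1} |ρ̂[k] - ρ̂[-(n-k)]|² · k(n-k)/n`, `n = 2B+1`. -/
noncomputable def SB (B : ℕ) (rhohat : ℤ → ℂ) : ℝ :=
  ∑ k ∈ Finset.Icc (1 : ℤ) (2 * B : ℤ),
    ‖rhohat k - rhohat (-((2 * B + 1 : ℤ) - k))‖ ^ 2 *
      ((k * ((2 * B + 1 : ℤ) - k) : ℤ) : ℝ) / ((2 * B + 1 : ℕ) : ℝ)

/-- The squared Frobenius norm of a complex matrix. -/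
noncomputable def frobSq {m : Type*} [Fintype m] (A : Matrix m m ℂ) : ℝ :=
  ∑ i, ∑ j, ‖A i j‖ ^ 2

/-!
On the cyclic diagonal `i - j ≡ k (mod n)` a circulant matrix is constant, while an `n × n` Toeplitz
matrix takes the value `ρ k` at the `n - k` places without wrap-around and `ρ (k - n)` at the
other `k` places. The squared Frobenius distance is therefore a sum over `k` of independent
two-point least-squares problems, each solved by the weighted mean of `ρ k` and `ρ (k - n)`.
-/

section CyclicDiagonals

open scoped Finset

variable {n : ℕ} {M : Type*} [AddCommMonoid M]

lemma intCast_val_add_sub_val (k j : Fin n) :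
    (((k + j : Fin n) : ℕ) : ℤ) - (j : ℕ) = if (j : ℕ) < n - k then (k : ℤ) else k - n := by
  rw [Fin.val_add_eq_ite]
  split_ifs <;> omega

lemma sum_intCast_val_add_sub_val (k : Fin n) (f : ℤ → M) :
    ∑ j : Fin n, f (((k + j : Fin n) : ℕ) - (j : ℕ)) =
      (n - k : ℕ) • f k + (k : ℕ) • f (k - n) := by
  have card_unwrapped : #{j : Fin n | (j : ℕ) < n - k} = n - k := by
    rw [Fin.card_filter_val_lt, min_eq_right (Nat.sub_le _ _)]
  have card_wrapped : #{j : Fin n | ¬ (j : ℕ) < n - k} = k := by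
    have := Finset.card_filter_add_card_filter_not (s := Finset.univ)
      (fun j : Fin n => (j : ℕ) < n - k)
    rw [card_unwrapped, Finset.card_fin] at this
    omega
  simp only [intCast_val_add_sub_val, apply_ite f, Finset.sum_ite, Finset.sum_const,
    card_unwrapped, card_wrapped]

lemma sum_sum_eq_sum_cyclic_diagonals [NeZero n] (f : ℤ → Fin n → M) :
    ∑ i : Fin n, ∑ j : Fin n, f ((i : ℕ) - (j : ℕ)) (i - j) =
      ∑ k : Fin n, ((n - k : ℕ) • f k k + (k : ℕ) • f (k - n) k) :=
  calc
    _ = ∑ j : Fin n, ∑ i : Fin n, f ((i : ℕ) - (j : ℕ)) (i - j) := Finset.sum_comm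
    _ = ∑ j : Fin n, ∑ k : Fin n, f (((k + j : Fin n) : ℕ) - (j : ℕ)) k := by
      refine Finset.sum_congr rfl fun j _ => ?_
      rw [← Equiv.sum_comp (Equiv.addRight j)]
      simp only [Equiv.coe_addRight, add_sub_cancel_right]
    _ = ∑ k : Fin n, ∑ j : Fin n, f (((k + j : Fin n) : ℕ) - (j : ℕ)) k := Finset.sum_comm
    _ = _ := Finset.sum_congr rfl fun k _ => sum_intCast_val_add_sub_val k (f · k)

end CyclicDiagonals

section ClosestCirculant

open scoped Matrix.Norms.Frobenius

/-- The `n × n` Toeplitz matrix with entries `ρ (i - j)`, the difference being taken in `ℤ`. -/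
def toeplitz {α : Type*} (n : ℕ) (ρ : ℤ → α) : Matrix (Fin n) (Fin n) α :=
  Matrix.of fun i j => ρ ((i : ℕ) - (j : ℕ))

lemma frobenius_norm_sq {m n α : Type*} [Fintype m] [Fintype n] [SeminormedAddCommGroup α]
    (A : Matrix m n α) : ‖A‖ ^ 2 = ∑ i, ∑ j, ‖A i j‖ ^ 2 := by
  have sum_nonneg : 0 ≤ ∑ i, ∑ j, ‖A i j‖ ^ 2 := by positivity
  simp only [Matrix.frobenius_norm_def, Real.rpow_two, ← Real.sqrt_eq_rpow, Real.sq_sqrt sum_nonneg]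

variable {E : Type*} [SeminormedAddCommGroup E] [InnerProductSpace ℝ E]

lemma weighted_norm_sub_sq_add_eq_lineMap (t : ℝ) (a b z : E) :
    (1 - t) * ‖a - z‖ ^ 2 + t * ‖b - z‖ ^ 2 =
      ‖AffineMap.lineMap a b t - z‖ ^ 2 + t * (1 - t) * ‖a - b‖ ^ 2 := by
  have lineMap_sub : AffineMap.lineMap a b t - z = (1 - t) • (a - z) + t • (b - z) := by
    rw [AffineMap.lineMap_apply_module]
    module
  rw [lineMap_sub, ← sub_sub_sub_cancel_right a b z, norm_add_sq_real,
    norm_sub_sq_real (a - z) (b - z), norm_smul, norm_smul, mul_pow, mul_pow, Real.norm_eq_abs,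
    Real.norm_eq_abs, sq_abs, sq_abs, real_inner_smul_left, real_inner_smul_right]
  ring

/-- The average of the Toeplitz matrix of `ρ` along each of its cyclic diagonals: on the `k`-th one
the value `ρ k` has weight `(n - k) / n` and the value `ρ (k - n)` has weight `k / n`. -/
noncomputable def cyclicDiagonalMean (n : ℕ) (ρ : ℤ → E) (k : Fin n) : E :=
  AffineMap.lineMap (ρ k) (ρ (k - n)) ((k : ℝ) / n)

variable {n : ℕ} [NeZero n]

lemma frobenius_norm_toeplitz_sub_circulant_sq (ρ : ℤ → E) (v : Fin n → E) :
    ‖toeplitz n ρ - Matrix.circulant v‖ ^ 2 =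
      n * ∑ k, ‖cyclicDiagonalMean n ρ k - v k‖ ^ 2 +
        ∑ k : Fin n, ‖ρ k - ρ (k - n)‖ ^ 2 * (k * (n - k)) / n := by
  have hn : (n : ℝ) ≠ 0 := NeZero.ne _
  simp only [frobenius_norm_sq, toeplitz, Matrix.sub_apply, Matrix.of_apply,
    Matrix.circulant_apply]
  rw [sum_sum_eq_sum_cyclic_diagonals (fun d k => ‖ρ d - v k‖ ^ 2), Finset.mul_sum,
    ← Finset.sum_add_distrib]
  refine Finset.sum_congr rfl fun k _ => ?_
  have two_point := weighted_norm_sub_sq_add_eq_lineMap ((k : ℝ) / n) (ρ k) (ρ (k - n)) (v k)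
  rw [cyclicDiagonalMean, eq_sub_of_add_eq two_point.symm, nsmul_eq_mul, nsmul_eq_mul,
    Nat.cast_sub k.is_le']
  field_simp
  ring

theorem stmt_3_general (ρ : ℤ → E) :
    (∀ v : Fin n → E,
      ‖toeplitz n ρ - Matrix.circulant (cyclicDiagonalMean n ρ)‖ ^ 2 ≤
        ‖toeplitz n ρ - Matrix.circulant v‖ ^ 2) ∧
    ‖toeplitz n ρ - Matrix.circulant (cyclicDiagonalMean n ρ)‖ ^ 2 =
      ∑ k : Fin n, ‖ρ k - ρ (k - n)‖ ^ 2 * (k * (n - k)) / n := by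
  have min_eq : ‖toeplitz n ρ - Matrix.circulant (cyclicDiagonalMean n ρ)‖ ^ 2 =
      ∑ k : Fin n, ‖ρ k - ρ (k - n)‖ ^ 2 * (k * (n - k)) / n := by
    simp [frobenius_norm_toeplitz_sub_circulant_sq]
  refine ⟨fun v => ?_, min_eq⟩
  rw [min_eq, frobenius_norm_toeplitz_sub_circulant_sq]
  exact le_add_of_nonneg_left (by positivity)

lemma frobSq_eq_frobenius_norm_sq {m : Type*} [Fintype m] (A : Matrix m m ℂ) :
    frobSq A = ‖A‖ ^ 2 :=
  (frobenius_norm_sq A).symm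

end ClosestCirculant

lemma Tmat_eq_toeplitz (B : ℕ) (ρ : ℤ → ℂ) : Tmat B ρ = toeplitz (2 * B + 1) ρ := rfl

lemma Cmat_eq_circulant (B : ℕ) (v : Fin (2 * B + 1) → ℂ) : Cmat B v = Matrix.circulant v := rfl

lemma vopt_eq_cyclicDiagonalMean (B : ℕ) (ρ : ℤ → ℂ) :
    vopt B ρ = cyclicDiagonalMean (2 * B + 1) ρ := by
  ext k
  have hn : (2 * B + 1 : ℂ) ≠ 0 := by exact_mod_cast Nat.succ_ne_zero (2 * B)
  simp only [vopt, cyclicDiagonalMean, AffineMap.lineMap_apply_module, Complex.real_smul, neg_sub]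
  push_cast
  field_simp
  ring

lemma SB_eq_sum_fin (B : ℕ) (ρ : ℤ → ℂ) :
    SB B ρ = ∑ k : Fin (2 * B + 1),
      ‖ρ k - ρ (k - (2 * B + 1 : ℕ))‖ ^ 2 * (k * ((2 * B + 1 : ℕ) - k)) / (2 * B + 1 : ℕ) := by
  have card_Icc : (2 * B + 1 - 1 : ℤ).toNat = 2 * B := by omega
  rw [SB, Int.Icc_eq_finset_map, Finset.sum_map, card_Icc, Fin.sum_univ_succ,
    ← Fin.sum_univ_eq_sum_range]
  simp [add_comm]

/-- `C_{v_opt}` is the closest circulant matrix to the Toeplitz matrix `T_ρ`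
in the Frobenius norm, and the minimal squared distance equals `S_B(ρ̂)`. -/
theorem stmt_3 (B : ℕ) (hB : 1 ≤ B) (rhohat : ℤ → ℂ) :
    (∀ v : Fin (2 * B + 1) → ℂ,
      frobSq (Tmat B rhohat - Cmat B (vopt B rhohat)) ≤ frobSq (Tmat B rhohat - Cmat B v)) ∧
    frobSq (Tmat B rhohat - Cmat B (vopt B rhohat)) = SB B rhohat := by
  simpa only [Tmat_eq_toeplitz, Cmat_eq_circulant, vopt_eq_cyclicDiagonalMean, SB_eq_sum_fin,
    frobSq_eq_frobenius_norm_sq] using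
    stmt_3_general (n := 2 * B + 1) rhohat
end

section
/- Let ρ̂ : {−2B,…,2B} → ℂ satisfy ρ̂[−k] = conj(ρ̂[k]) for all k and S_B(ρ̂) = 0, so that T_ρ = C_{v_opt}. Let x̃ ∈ ℂⁿ with |x̃[k]| = 1 for all k ∈ {−B,…,B}, and set M₂ = 2π·D_x̃·T_ρ·D_x̃*. If λ is an eigenvalue of M₂ whose eigenspace is one-dimensional and u ∈ ℂⁿ is a unit-norm eigenvector of M₂ for λ, then there exist l ∈ {0,…,n−1} and α ∈ ℂ with |α| = 1 such that u[k] = (α/√n)·e^{−ι2πlk/n}·x̃[k] for all k ∈ {−B,…,B}. -/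
/-!
If `S_B(ρ̂) = 0` then `ρ̂[k] = ρ̂[k - n]` for `1 ≤ k ≤ n - 1`, so `T_ρ` is circulant. Circulant
matrices over a finite abelian group commute with every translation, hence translations preserve
each of their eigenspaces. A vector `v` spanning a one-dimensional eigenspace is therefore an
eigenvector of all translations, `v (i + g) = c_g * v i`, and `g ↦ c_g = v g / v 0` is a character.
Conjugating by the unitary `D_x̃` only multiplies eigenvectors by `x̃`, the characters of `ℤ/n` are
the Fourier modes, and the unit norm fixes the modulus of the remaining scalar.
-/

open Complex Real ComplexConjugate

/-- The angle `2πl·k/n` for the index `i : Fin (2B+1)` representing `k = i - B`. -/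
noncomputable def phase (B l : ℕ) (i : Fin (2 * B + 1)) : ℝ :=
  2 * π * (l : ℝ) * (((((i : ℕ) : ℤ) - (B : ℤ)) : ℤ) : ℝ) / ((2 * B + 1 : ℕ) : ℝ)

section Eigenvectors

open Module End

lemma exists_apply_eq_smul_of_commute_of_finrank_eigenspace_eq_one {K V : Type*} [Field K]
    [AddCommGroup V] [Module K V] {f g : End K V} {μ : K} {u : V}
    (hfg : Commute f g) (hdim : finrank K (f.eigenspace μ) = 1) (hu : f.HasEigenvector μ u) :
    ∃ c : K, g u = c • u := by
  have hgu : g u ∈ f.eigenspace μ := mapsTo_genEigenspace_of_comm hfg μ 1 hu.1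
  have hu_ne_zero : (⟨u, hu.1⟩ : f.eigenspace μ) ≠ 0 := Subtype.coe_ne_coe.mp hu.2
  obtain ⟨c, hc⟩ := exists_smul_eq_of_finrank_eq_one hdim hu_ne_zero ⟨g u, hgu⟩
  exact ⟨c, congrArg Subtype.val hc.symm⟩

variable {R V W : Type*} [CommRing R] [AddCommGroup V] [Module R V] [AddCommGroup W] [Module R W]

lemma eigenspace_conj (e : V ≃ₗ[R] W) (f : End R V) (μ : R) :
    (e.conj f).eigenspace μ = (f.eigenspace μ).map (e : V →ₗ[R] W) := by
  ext w
  rw [Submodule.mem_map_equiv, mem_eigenspace_iff, mem_eigenspace_iff, LinearEquiv.conj_apply_apply,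
    ← LinearEquiv.eq_symm_apply, map_smul]

lemma finrank_eigenspace_conj (e : V ≃ₗ[R] W) (f : End R V) (μ : R) :
    finrank R ((e.conj f).eigenspace μ) = finrank R (f.eigenspace μ) := by
  rw [eigenspace_conj, LinearEquiv.finrank_map_eq]

lemma hasEigenvector_conj_iff (e : V ≃ₗ[R] W) (f : End R V) {μ : R} {w : W} :
    (e.conj f).HasEigenvector μ w ↔ f.HasEigenvector μ (e.symm w) := by
  rw [hasEigenvector_iff, hasEigenvector_iff, eigenspace_conj, Submodule.mem_map_equiv, ne_eq,
    ne_eq, LinearEquiv.map_eq_zero_iff]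

end Eigenvectors

section Circulant

open Matrix Module

lemma exists_addChar_eq_mul_of_forall_translate_eq_mul {G K : Type*} [AddMonoid G] [Field K]
    {v : G → K} (hv : v ≠ 0) (htrans : ∀ g, ∃ c, ∀ i, v (i + g) = c * v i) :
    ∃ χ : AddChar G K, ∀ i, v i = v 0 * χ i := by
  choose c hc using htrans
  have v_eq (g : G) : v g = c g * v 0 := by rw [← hc g 0, zero_add]
  have v_zero_ne : v 0 ≠ 0 := fun h =>
    hv <| funext fun g => by rw [v_eq, h, mul_zero, Pi.zero_apply]
  refine ⟨⟨c, ?_, fun g h => ?_⟩, fun i => (v_eq i).trans (mul_comm _ _)⟩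
  · exact mul_right_cancel₀ v_zero_ne ((v_eq 0).symm.trans (one_mul _).symm)
  · apply mul_right_cancel₀ v_zero_ne
    calc c (g + h) * v 0 = v (g + h) := (v_eq _).symm
      _ = c h * (c g * v 0) := by rw [hc, v_eq g]
      _ = c g * c h * v 0 := by ring

variable {G : Type*} [AddCommGroup G] [Fintype G]

lemma circulant_single_one_mulVec {R : Type*} [NonAssocSemiring R] [DecidableEq G]
    (g : G) (v : G → R) (i : G) : (circulant (Pi.single g 1) *ᵥ v) i = v (i - g) := by
  have hsub (j : G) : i - j = g ↔ j = i - g := by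
    rw [sub_eq_iff_eq_add, eq_sub_iff_add_eq, add_comm g, eq_comm]
  simp [mulVec, dotProduct, Pi.single_apply, hsub]

lemma exists_addChar_of_hasEigenvector_circulant {K : Type*} [Field K] {v w : G → K} {μ : K}
    (hdim : finrank K (End.eigenspace (circulant v).mulVecLin μ) = 1)
    (hw : End.HasEigenvector (circulant v).mulVecLin μ w) :
    ∃ χ : AddChar G K, ∀ i, w i = w 0 * χ i := by
  classical
  refine exists_addChar_eq_mul_of_forall_translate_eq_mul hw.2 fun g => ?_
  have hcomm : Commute (circulant v).mulVecLin (circulant (Pi.single (-g) 1)).mulVecLin := by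
    rw [commute_iff_eq, End.mul_eq_comp, End.mul_eq_comp, ← mulVecLin_mul,
      ← mulVecLin_mul, circulant_mul_comm]
  obtain ⟨c, hc⟩ := exists_apply_eq_smul_of_commute_of_finrank_eigenspace_eq_one hcomm hdim hw
  refine ⟨c, fun i => ?_⟩
  simpa [circulant_single_one_mulVec] using congrFun hc i

end Circulant

section UnitaryConjugation

open Matrix Module

variable {G : Type*} [Fintype G] [DecidableEq G]

lemma mulVecLin_unitary_conj {R : Type*} [CommRing R] [StarRing R] (U : unitaryGroup G R)
    (A : Matrix G G R) :
    ((U : Matrix G G R) * A * (U : Matrix G G R)ᴴ).mulVecLin =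
      (UnitaryGroup.toLinearEquiv U).conj A.mulVecLin := by
  rw [mulVecLin_mul, mulVecLin_mul]
  rfl

variable {𝕜 : Type*} [RCLike 𝕜]

lemma diagonal_mem_unitaryGroup {x : G → 𝕜} (hx : ∀ i, ‖x i‖ = 1) :
    diagonal x ∈ unitaryGroup G 𝕜 := by
  rw [mem_unitaryGroup_iff, star_eq_conjTranspose, diagonal_conjTranspose, diagonal_mul_diagonal,
    ← diagonal_one]
  congr 1
  funext i
  simp [RCLike.mul_conj, hx]

lemma exists_addChar_of_hasEigenvector_diagonal_conj_circulant [AddCommGroup G] {v x u : G → 𝕜}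
    {μ : 𝕜} (hx : ∀ i, ‖x i‖ = 1)
    (hdim : finrank 𝕜
      (End.eigenspace (diagonal x * circulant v * (diagonal x)ᴴ).mulVecLin μ) = 1)
    (hu : End.HasEigenvector (diagonal x * circulant v * (diagonal x)ᴴ).mulVecLin μ u) :
    ∃ (b : 𝕜) (χ : AddChar G 𝕜), ∀ i, u i = b * (χ i * x i) := by
  let U : unitaryGroup G 𝕜 := ⟨diagonal x, diagonal_mem_unitaryGroup hx⟩
  let e := UnitaryGroup.toLinearEquiv U
  have hconj : (diagonal x * circulant v * (diagonal x)ᴴ).mulVecLin =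
      e.conj (circulant v).mulVecLin := mulVecLin_unitary_conj U _
  rw [hconj, finrank_eigenspace_conj] at hdim
  rw [hconj, hasEigenvector_conj_iff] at hu
  obtain ⟨χ, hχ⟩ := exists_addChar_of_hasEigenvector_circulant hdim hu
  refine ⟨e.symm u 0, χ, fun i => ?_⟩
  calc u i = (diagonal x *ᵥ e.symm u) i := congrFun (e.apply_symm_apply u).symm i
    _ = x i * (e.symm u 0 * χ i) := by rw [mulVec_diagonal, hχ]
    _ = e.symm u 0 * (χ i * x i) := by ring

end UnitaryConjugation

lemma norm_sqrt_card_mul_eq_one {ι 𝕜 : Type*} [Fintype ι] [RCLike 𝕜] {b : 𝕜} {w : ι → 𝕜}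
    (hw : ∀ i, ‖w i‖ = 1) (hsum : ∑ i, ‖b * w i‖ ^ 2 = 1) :
    ‖(√(Fintype.card ι : ℝ) : 𝕜) * b‖ = 1 := by
  have hcard : (Fintype.card ι : ℝ) * ‖b‖ ^ 2 = 1 := by simpa [hw] using hsum
  rw [← sq_eq_sq₀ (norm_nonneg _) zero_le_one, norm_mul, mul_pow, RCLike.norm_ofReal, sq_abs,
    Real.sq_sqrt (Nat.cast_nonneg _), hcard, one_pow]

section FourierModes

lemma exists_eq_exp_neg_of_pow_eq_one {n : ℕ} [NeZero n] {ζ : ℂ} (hζ : ζ ^ n = 1) :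
    ∃ l < n, ζ = Complex.exp (-(2 * π * l / n) * Complex.I) := by
  obtain ⟨l, hl, h⟩ := (Complex.isPrimitiveRoot_exp n (NeZero.ne n)).eq_pow_of_pow_eq_one
    (ξ := ζ⁻¹) (by rw [inv_pow, hζ, inv_one])
  refine ⟨l, hl, ?_⟩
  rw [← inv_inv ζ, ← h, ← Complex.exp_nat_mul, ← Complex.exp_neg]
  congr 1
  ring

lemma exists_forall_addChar_fin_apply_eq_exp {n : ℕ} [NeZero n] (χ : AddChar (Fin n) ℂ) :
    ∃ l < n, ∀ i : Fin n, χ i = Complex.exp (-(2 * π * l * (i : ℕ) / n) * Complex.I) := by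
  have hroot : χ 1 ^ n = 1 := by
    have hn : n • (1 : Fin n) = 0 := by simpa using card_nsmul_eq_zero' (x := (1 : Fin n))
    rw [← AddChar.map_nsmul_eq_pow, hn, AddChar.map_zero_eq_one]
  obtain ⟨l, hl, hχ⟩ := exists_eq_exp_neg_of_pow_eq_one hroot
  refine ⟨l, hl, fun i => ?_⟩
  have hi : (i : ℕ) • (1 : Fin n) = i := by
    open Fin.CommRing in
    exact (nsmul_one _).trans (Fin.cast_val_eq_self i)
  calc χ i = χ 1 ^ (i : ℕ) := by rw [← AddChar.map_nsmul_eq_pow, hi]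
    _ = Complex.exp (-(2 * π * l * (i : ℕ) / n) * Complex.I) := by
      rw [hχ, ← Complex.exp_nat_mul]
      congr 1
      ring

lemma exists_forall_addChar_apply_eq_mul_exp_phase {B : ℕ} (χ : AddChar (Fin (2 * B + 1)) ℂ) :
    ∃ l < 2 * B + 1, ∃ ω : ℂ, ‖ω‖ = 1 ∧
      ∀ i, χ i = ω * Complex.exp (-(phase B l i : ℂ) * Complex.I) := by
  obtain ⟨l, hl, hχ⟩ := exists_forall_addChar_fin_apply_eq_exp χ
  -- `phase` vanishes at `i = B`, the index of `k = 0`.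
  refine ⟨l, hl, χ (Fin.ofNat _ B), χ.norm_apply _, fun i => ?_⟩
  rw [hχ, hχ, ← Complex.exp_add, Fin.val_ofNat, Nat.mod_eq_of_lt (by omega)]
  congr 1
  simp only [phase]
  push_cast
  ring

end FourierModes

section Toeplitz

variable {B : ℕ} {rhohat : ℤ → ℂ}

lemma SB_eq_zero_iff :
    SB B rhohat = 0 ↔ ∀ k ∈ Finset.Icc (1 : ℤ) (2 * B), rhohat k = rhohat (k - (2 * B + 1)) := by
  have hweight {k : ℤ} (hk : k ∈ Finset.Icc (1 : ℤ) (2 * B)) :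
      (0 : ℝ) < ((k * ((2 * B + 1 : ℤ) - k) : ℤ) : ℝ) := by
    rw [Finset.mem_Icc] at hk
    exact Int.cast_pos.mpr (mul_pos (by omega) (by omega))
  rw [SB, Finset.sum_eq_zero_iff_of_nonneg fun k hk => by have := hweight hk; positivity]
  refine forall₂_congr fun k hk => ?_
  have hn : ((2 * B + 1 : ℕ) : ℝ) ≠ 0 := by positivity
  rw [div_eq_zero_iff, or_iff_left hn, mul_eq_zero, or_iff_left (hweight hk).ne', sq_eq_zero_iff,
    norm_eq_zero, sub_eq_zero, neg_sub]

lemma Tmat_eq_circulant_of_SB_eq_zero (hS : SB B rhohat = 0) :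
    Tmat B rhohat = Matrix.circulant fun i : Fin (2 * B + 1) => rhohat (i : ℕ) := by
  ext i j
  rw [Tmat, Matrix.of_apply, Matrix.circulant_apply, Fin.coe_int_sub_eq_ite]
  split_ifs with hij
  · rfl
  · have hk : (i : ℤ) - j + (2 * B + 1 : ℕ) ∈ Finset.Icc (1 : ℤ) (2 * B) := by
      rw [Finset.mem_Icc]
      omega
    rw [SB_eq_zero_iff.mp hS _ hk]
    congr 1
    push_cast
    ring

end Toeplitz

theorem stmt_4_general {B : ℕ} {rhohat : ℤ → ℂ} (hS : SB B rhohat = 0)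
    {xt : Fin (2 * B + 1) → ℂ} (hxt : ∀ i, ‖xt i‖ = 1) {a lam : ℂ}
    {M : Matrix (Fin (2 * B + 1)) (Fin (2 * B + 1)) ℂ}
    (hM : M = a • (Matrix.diagonal xt * Tmat B rhohat * (Matrix.diagonal xt).conjTranspose))
    (hdim : Module.finrank ℂ (Module.End.eigenspace (Matrix.mulVecLin M) lam) = 1)
    {u : Fin (2 * B + 1) → ℂ} (hu : M.mulVec u = lam • u) (hunorm : ∑ i, ‖u i‖ ^ 2 = 1) :
    ∃ l < 2 * B + 1, ∃ α : ℂ, ‖α‖ = 1 ∧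
      ∀ i : Fin (2 * B + 1),
        u i = α / (Real.sqrt ((2 * B + 1 : ℕ) : ℝ) : ℂ) *
          Complex.exp (-((phase B l i : ℝ) : ℂ) * Complex.I) * xt i := by
  have hu_ne_zero : u ≠ 0 := by
    rintro rfl
    simp at hunorm
  have hu_eig : Module.End.HasEigenvector M.mulVecLin lam u :=
    ⟨Module.End.mem_eigenspace_iff.mpr hu, hu_ne_zero⟩
  rw [Tmat_eq_circulant_of_SB_eq_zero hS, ← Matrix.smul_mul, ← Matrix.mul_smul,
    ← Matrix.circulant_smul] at hM
  subst hM
  obtain ⟨b, χ, hb⟩ := exists_addChar_of_hasEigenvector_diagonal_conj_circulant hxt hdim hu_eig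
  obtain ⟨l, hl, ω, hω, hχ⟩ := exists_forall_addChar_apply_eq_mul_exp_phase χ
  have hnorm : ‖(√((2 * B + 1 : ℕ) : ℝ) : ℂ) * b‖ = 1 := by
    simpa using norm_sqrt_card_mul_eq_one (w := fun i => χ i * xt i) (by simp [hxt])
      (by simpa only [hb] using hunorm)
  refine ⟨l, hl, √((2 * B + 1 : ℕ) : ℝ) * b * ω, by rw [norm_mul, hnorm, hω, one_mul], fun i => ?_⟩
  have hsqrt : (√((2 * B + 1 : ℕ) : ℝ) : ℂ) ≠ 0 := by
    exact_mod_cast (Real.sqrt_pos.mpr (by positivity : (0 : ℝ) < (2 * B + 1 : ℕ))).ne'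
  rw [hb, hχ]
  field_simp

/-- when `S_B(ρ̂) = 0` (so `T_ρ` is circulant), any unit-norm eigenvector of
`M₂ = 2π D_x̃ T_ρ D_x̃*` for an eigenvalue with a one-dimensional eigenspace equals
`(α/√n)·e^{-ι2πlk/n}·x̃[k]` for some `l ∈ {0,…,n-1}` and some unimodular `α`. -/
theorem stmt_4 (B : ℕ) (hB : 1 ≤ B) (rhohat : ℤ → ℂ)
    (hρsym : ∀ k ∈ Finset.Icc (-(2 * B : ℤ)) (2 * B : ℤ), rhohat (-k) = conj (rhohat k))
    (hS : SB B rhohat = 0)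
    (xt : Fin (2 * B + 1) → ℂ) (hxt : ∀ i, ‖xt i‖ = 1)
    (M₂ : Matrix (Fin (2 * B + 1)) (Fin (2 * B + 1)) ℂ)
    (hM₂ : M₂ = ((2 * π : ℝ) : ℂ) •
      (Matrix.diagonal xt * Tmat B rhohat * (Matrix.diagonal xt).conjTranspose))
    (lam : ℂ)
    (hdim : Module.finrank ℂ (Module.End.eigenspace (Matrix.mulVecLin M₂) lam) = 1)
    (u : Fin (2 * B + 1) → ℂ)
    (hu : M₂.mulVec u = lam • u)
    (hunorm : ∑ i, ‖u i‖ ^ 2 = 1) :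
    ∃ l < 2 * B + 1, ∃ α : ℂ, ‖α‖ = 1 ∧
      ∀ i : Fin (2 * B + 1),
        u i = α / (Real.sqrt ((2 * B + 1 : ℕ) : ℝ) : ℂ) *
          Complex.exp (-((phase B l i : ℝ) : ℂ) * Complex.I) * xt i := by
  exact stmt_4_general hS hxt hM₂ hdim hu hunorm
end

section
/- Let x̃ ∈ ℂⁿ satisfy x̃[−k] = conj(x̃[k]) and let ρ̂ : {−2B,…,2B} → ℂ satisfy ρ̂[−k] = conj(ρ̂[k]); set M₂ = 2π·D_x̃·T_ρ·D_x̃*. (i) If v ∈ ℂⁿ satisfies M₂v = λv with λ ∈ ℝ, then the vector v′ defined by v′[k] = conj(v[−k]) also satisfies M₂v′ = λv′. (ii) If in addition the eigenspace of λ is one-dimensional and v[0] is a nonzero real number, then v[k] = conj(v[−k]) for all k ∈ {−B,…,B}. -/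
open Complex Real ComplexConjugate

/-- The index of `-k` when `i : Fin (2B+1)` represents `k = i - B ∈ {-B,…,B}`. -/
def negIdx (B : ℕ) (i : Fin (2 * B + 1)) : Fin (2 * B + 1) :=
  ⟨2 * B - (i : ℕ), by omega⟩

/-!
Call `M` centrohermitian if `M[-k₁,-k₂] = conj M[k₁,k₂]`, that is, if `M` commutes with the
antilinear flip `v ↦ (k ↦ conj v[-k])`. The symmetries of `x̃` and `ρ̂` make each factor of `M₂`,
hence `M₂` itself, centrohermitian, so the flip preserves the eigenspaces of `M₂` for real
eigenvalues. In a one-dimensional eigenspace, a vector is determined by its value at `k = 0` as soon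
as that value is nonzero; when the value is real, `v` and its flip share it and so coincide.
-/

open Matrix Module.End

section Flip

variable {ι R : Type*} [CommSemiring R] [StarRing R]

/-- The antilinear flip `v ↦ (k ↦ conj v[σ k])` of vectors along a map `σ` of the index set. The
conjugate flip `v'[k] = conj v[-k]` is the case where `σ` reverses the indices. -/
def conjFlip (σ : ι → ι) : (ι → R) →ₛₗ[starRingEnd R] (ι → R) where
  toFun v i := conj (v (σ i))
  map_add' _ _ := funext fun _ => map_add _ _ _
  map_smul' _ _ := funext fun _ => map_mul _ _ _

/-- A matrix is centrohermitian along a permutation `σ` of its index set if permuting both its rows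
and its columns by `σ` conjugates its entries. The classical notion is the case where `σ` reverses
the indices. -/
def IsCentrohermitian (σ : Equiv.Perm ι) (M : Matrix ι ι R) : Prop :=
  M.submatrix σ σ = M.map conj

theorem isCentrohermitian_diagonal [DecidableEq ι] {σ : Equiv.Perm ι} {x : ι → R}
    (hx : ∀ i, x (σ i) = conj (x i)) : IsCentrohermitian σ (diagonal x) := by
  rw [IsCentrohermitian, submatrix_diagonal_equiv, diagonal_map (map_zero _)]
  exact congrArg diagonal (funext hx)

namespace IsCentrohermitian

variable {σ : Equiv.Perm ι} {M N : Matrix ι ι R}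

theorem conjTranspose (hM : IsCentrohermitian σ M) : IsCentrohermitian σ Mᴴ := by
  rw [IsCentrohermitian, ← conjTranspose_submatrix, hM]
  rfl

theorem smul {a : R} (ha : IsSelfAdjoint a) (hM : IsCentrohermitian σ M) :
    IsCentrohermitian σ (a • M) := by
  have conj_a : conj a = a := ha
  calc (a • M).submatrix σ σ = a • M.submatrix σ σ := rfl
    _ = a • M.map conj := by rw [hM]
    _ = (a • M).map conj := by rw [map_smul' _ _ _ (map_mul _), conj_a]

variable [Fintype ι]

theorem mul (hM : IsCentrohermitian σ M) (hN : IsCentrohermitian σ N) :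
    IsCentrohermitian σ (M * N) := by
  rw [IsCentrohermitian, ← submatrix_mul_equiv M N σ σ σ, hM, hN, Matrix.map_mul]

theorem mulVec_conjFlip (hM : IsCentrohermitian σ M) (v : ι → R) :
    M *ᵥ conjFlip σ v = conjFlip σ (M *ᵥ v) := by
  have conj_entry (i j : ι) : conj (M (σ i) (σ j)) = M i j := by
    rw [← submatrix_apply M, hM, map_apply, starRingEnd_self_apply]
  ext i
  calc ∑ j, M i j * conj (v (σ j))
      = conj (∑ j, M (σ i) (σ j) * v (σ j)) := by simp only [map_sum, map_mul, conj_entry]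
    _ = conj (∑ j, M (σ i) j * v j) := by rw [Equiv.sum_comp σ fun j => M (σ i) j * v j]

theorem mulVec_conjFlip_eq_smul (hM : IsCentrohermitian σ M) {a : R} (ha : IsSelfAdjoint a)
    {v : ι → R} (hv : M *ᵥ v = a • v) : M *ᵥ conjFlip σ v = a • conjFlip σ v := by
  have conj_a : conj a = a := ha
  rw [hM.mulVec_conjFlip, hv, map_smulₛₗ, conj_a]

end IsCentrohermitian

end Flip

theorem eq_of_mem_of_finrank_eq_one_of_map_eq {K V U : Type*} [DivisionRing K] [AddCommGroup V]
    [Module K V] [AddCommGroup U] [Module K U] {W : Submodule K V} (hW : Module.finrank K W = 1)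
    {v w : V} (hv : v ∈ W) (hw : w ∈ W) (φ : V →ₗ[K] U) (hφ : φ v = φ w) (hφv : φ v ≠ 0) :
    v = w := by
  have v_ne_zero : (⟨v, hv⟩ : W) ≠ 0 := fun h =>
    hφv (by rw [show v = 0 from congrArg Subtype.val h, map_zero])
  obtain ⟨c, hc⟩ := exists_smul_eq_of_finrank_eq_one hW v_ne_zero ⟨w, hw⟩
  have smul_v : c • v = w := congrArg Subtype.val hc
  have smul_φv : c • φ v = (1 : K) • φ v := by rw [← map_smul, smul_v, one_smul, hφ]
  have c_eq_one : c = 1 := smul_left_injective K hφv smul_φv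
  rw [← smul_v, c_eq_one, one_smul]

theorem IsCentrohermitian.conjFlip_eq_self {ι K : Type*} [Fintype ι] [Field K] [StarRing K]
    {σ : Equiv.Perm ι} {M : Matrix ι ι K} (hM : IsCentrohermitian σ M) {a : K}
    (ha : IsSelfAdjoint a) (hdim : Module.finrank K (eigenspace M.mulVecLin a) = 1) {v : ι → K}
    (hv : M *ᵥ v = a • v) {i : ι} (hi : σ i = i) (hvi : IsSelfAdjoint (v i)) (hvi0 : v i ≠ 0) :
    conjFlip σ v = v := by
  have flip_apply : conjFlip σ v i = v i := (congrArg (fun j => conj (v j)) hi).trans hvi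
  exact (eq_of_mem_of_finrank_eq_one_of_map_eq hdim (mem_eigenspace_iff.2 hv)
    (mem_eigenspace_iff.2 (hM.mulVec_conjFlip_eq_smul ha hv)) (LinearMap.proj i)
    flip_apply.symm hvi0).symm

theorem negIdx_eq_revPerm (B : ℕ) : negIdx B = Fin.revPerm := by
  ext i
  simp only [negIdx, Fin.revPerm_apply, Fin.val_rev]
  omega

theorem isCentrohermitian_tmat {B : ℕ} {rhohat : ℤ → ℂ}
    (hρ : ∀ k ∈ Finset.Icc (-(2 * B : ℤ)) (2 * B : ℤ), rhohat (-k) = conj (rhohat k)) :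
    IsCentrohermitian Fin.revPerm (Tmat B rhohat) := by
  ext i j
  have rev_sub_rev : ((i.rev : ℕ) : ℤ) - (j.rev : ℕ) = -((i : ℤ) - j) := by
    simp only [Fin.val_rev]
    omega
  have sub_mem : (i : ℤ) - j ∈ Finset.Icc (-(2 * B : ℤ)) (2 * B) := by
    rw [Finset.mem_Icc]
    omega
  exact (congrArg rhohat rev_sub_rev).trans (hρ _ sub_mem)

/-- with conjugate-symmetric `x̃` and `ρ̂`, (i) eigenvectors of
`M₂ = 2π D_x̃ T_ρ D_x̃*` are stable under the conjugate-flip `v'[k] = conj (v[-k])`, and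
(ii) an eigenvector for a one-dimensional eigenspace with `v[0]` real and nonzero satisfies
`v[k] = conj (v[-k])`. -/
theorem stmt_6 (B : ℕ) (hB : 1 ≤ B)
    (xt : Fin (2 * B + 1) → ℂ) (hxtsym : ∀ i, xt (negIdx B i) = conj (xt i))
    (rhohat : ℤ → ℂ)
    (hρsym : ∀ k ∈ Finset.Icc (-(2 * B : ℤ)) (2 * B : ℤ), rhohat (-k) = conj (rhohat k))
    (M₂ : Matrix (Fin (2 * B + 1)) (Fin (2 * B + 1)) ℂ)
    (hM₂ : M₂ = ((2 * π : ℝ) : ℂ) •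
      (Matrix.diagonal xt * Tmat B rhohat * (Matrix.diagonal xt).conjTranspose))
    (lam : ℝ) :
    (∀ v : Fin (2 * B + 1) → ℂ, M₂.mulVec v = ((lam : ℝ) : ℂ) • v →
      M₂.mulVec (fun i => conj (v (negIdx B i))) =
        ((lam : ℝ) : ℂ) • (fun i => conj (v (negIdx B i)))) ∧
    (∀ v : Fin (2 * B + 1) → ℂ, M₂.mulVec v = ((lam : ℝ) : ℂ) • v →
      Module.finrank ℂ (Module.End.eigenspace (Matrix.mulVecLin M₂) ((lam : ℝ) : ℂ)) = 1 →
      (v ⟨B, by omega⟩).im = 0 → v ⟨B, by omega⟩ ≠ 0 →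
      ∀ i, v i = conj (v (negIdx B i))) := by
  rw [negIdx_eq_revPerm] at hxtsym ⊢
  have hD := isCentrohermitian_diagonal hxtsym
  have hM : IsCentrohermitian Fin.revPerm M₂ :=
    hM₂ ▸ ((hD.mul (isCentrohermitian_tmat hρsym)).mul hD.conjTranspose).smul (conj_ofReal _)
  have hlam : IsSelfAdjoint (lam : ℂ) := conj_ofReal lam
  refine ⟨fun v hv => hM.mulVec_conjFlip_eq_smul hlam hv, fun v hv hdim him hne i => ?_⟩
  have rev_mid : Fin.revPerm (⟨B, by omega⟩ : Fin (2 * B + 1)) = ⟨B, by omega⟩ :=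
    Fin.ext (show 2 * B + 1 - (B + 1) = B by omega)
  have flip_eq := hM.conjFlip_eq_self hlam hdim hv rev_mid (conj_eq_iff_im.2 him) hne
  exact (congrFun flip_eq i).symm
end

section
/- Let I = {(k,q) : −B ≤ k ≤ B, 0 ≤ q ≤ Q_k−1} for given radial bandwidths Q_k ≥ 1 with Q_{−k} = Q_k. Let x̂, x̂′ ∈ ℂ^I be non-vanishing and let ρ̂, ρ̂′ : {−2B,…,2B} → ℂ be non-vanishing with ρ̂[0] = ρ̂′[0] = 1/(2π) and conjugate symmetry ρ̂[−k] = conj(ρ̂[k]) and ρ̂′[−k] = conj(ρ̂′[k]). Suppose the two pairs produce the same first two moments: x̂[k,q]·ρ̂[k] = x̂′[k,q]·ρ̂′[k] for all (k,q) ∈ I, and x̂[k₁,q₁]·conj(x̂[k₂,q₂])·ρ̂[k₁−k₂] = x̂′[k₁,q₁]·conj(x̂′[k₂,q₂])·ρ̂′[k₁−k₂] for all (k₁,q₁), (k₂,q₂) ∈ I. Then there exists a complex number u with |u| = 1 such that ρ̂′[k] = ρ̂[k]·u^k for all k ∈ {−2B,…,2B} and x̂′[k,q] = x̂[k,q]·u^{−k}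 for all (k,q) ∈ I. -/
open Complex Real ComplexConjugate

/-!
Put `r k = ρ' k / ρ k`. Equality of the first moments reads `x k q = x' k q * r k`; substituting
this into the second moments yields `r (k₁ - k₂) = r k₁ * star (r k₂)` for `|k₁|, |k₂| ≤ B`.
Such an `r`, unless it vanishes at `0`, is `k ↦ u ^ k` on `[-2B, 2B]` for a unitary `u`, and this
`u` is the required rotation.
-/

/-- A function on `ℤ` that satisfies the functional equation of a unitary character on differences
of frequencies in `[-B, B]`, hence constrained only on `[-2B, 2B]`. Since the zero function
satisfies this equation too, the value at `0` is required to be nonzero. -/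
structure IsTruncatedCharacter {G₀ : Type*} [GroupWithZero G₀] [StarMul G₀]
    (B : ℕ) (r : ℤ → G₀) : Prop where
  apply_zero_ne_zero : r 0 ≠ 0
  map_sub : ∀ k₁ ∈ Finset.Icc (-(B : ℤ)) B, ∀ k₂ ∈ Finset.Icc (-(B : ℤ)) B,
    r (k₁ - k₂) = r k₁ * star (r k₂)

namespace IsTruncatedCharacter

variable {G₀ : Type*} [GroupWithZero G₀] [StarMul G₀] {B : ℕ} {r : ℤ → G₀} {k : ℤ}

lemma map_zero (hr : IsTruncatedCharacter B r) : r 0 = 1 := by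
  have h_zero : (0 : ℤ) ∈ Finset.Icc (-(B : ℤ)) B := by simp
  have h_idem : r 0 * star (r 0) = r 0 := by
    rw [← hr.map_sub 0 h_zero 0 h_zero, sub_zero]
  exact star_injective (((mul_eq_left₀ hr.apply_zero_ne_zero).1 h_idem).trans (star_one G₀).symm)

lemma map_neg (hr : IsTruncatedCharacter B r) (hk : k ∈ Finset.Icc (-(B : ℤ)) B) :
    r (-k) = star (r k) := by
  rw [← zero_sub, hr.map_sub 0 (by simp) k hk, hr.map_zero, one_mul]

lemma star_apply_eq_inv (hr : IsTruncatedCharacter B r) (hk : k ∈ Finset.Icc (-(B : ℤ)) B) :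
    star (r k) = (r k)⁻¹ :=
  eq_inv_of_mul_eq_one_right <| by rw [← hr.map_sub k hk k hk, sub_self, hr.map_zero]

lemma apply_ne_zero (hr : IsTruncatedCharacter B r) (hk : k ∈ Finset.Icc (-(B : ℤ)) B) :
    r k ≠ 0 :=
  left_ne_zero_of_mul (b := star (r k)) <| by
    rw [← hr.map_sub k hk k hk, sub_self]
    exact hr.apply_zero_ne_zero

lemma apply_mem_unitary (hr : IsTruncatedCharacter B r) (hk : k ∈ Finset.Icc (-(B : ℤ)) B) :
    r k ∈ unitary G₀ := by
  rw [Unitary.mem_iff, hr.star_apply_eq_inv hk]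
  exact ⟨inv_mul_cancel₀ (hr.apply_ne_zero hk), mul_inv_cancel₀ (hr.apply_ne_zero hk)⟩

lemma apply_natCast (hr : IsTruncatedCharacter B r) {n : ℕ} (hn : n ≤ B) :
    r n = r 1 ^ n := by
  induction n with
  | zero => simpa using hr.map_zero
  | succ n ih =>
    calc r (n + 1 : ℕ) = r (n - (-1)) := by push_cast; rw [sub_neg_eq_add]
      _ = r n * star (r (-1)) :=
        hr.map_sub n (by rw [Finset.mem_Icc]; lia) (-1) (by rw [Finset.mem_Icc]; lia)
      _ = r 1 ^ n * r 1 := by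
        rw [hr.map_neg (by rw [Finset.mem_Icc]; lia), star_star, ih (by lia)]
      _ = r 1 ^ (n + 1) := (pow_succ _ _).symm

lemma apply_eq_zpow (hr : IsTruncatedCharacter B r) (hk : k ∈ Finset.Icc (-(B : ℤ)) B) :
    r k = r 1 ^ k := by
  rw [Finset.mem_Icc] at hk
  obtain ⟨n, rfl | rfl⟩ := k.eq_nat_or_neg
  · rw [hr.apply_natCast (by lia), zpow_natCast]
  · have hn : (n : ℤ) ∈ Finset.Icc (-(B : ℤ)) B := by rw [Finset.mem_Icc]; lia
    rw [hr.map_neg hn, hr.star_apply_eq_inv hn, hr.apply_natCast (by lia), zpow_neg, zpow_natCast]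

lemma apply_eq_zpow_of_mem_Icc_two_mul (hr : IsTruncatedCharacter B r) (hB : 1 ≤ B)
    (hk : k ∈ Finset.Icc (-(2 * B : ℤ)) (2 * B)) : r k = r 1 ^ k := by
  have h_one : (1 : ℤ) ∈ Finset.Icc (-(B : ℤ)) B := by rw [Finset.mem_Icc]; lia
  obtain ⟨a, ha, b, hb, rfl⟩ :
      ∃ a ∈ Finset.Icc (-(B : ℤ)) B, ∃ b ∈ Finset.Icc (-(B : ℤ)) B, a - b = k := by
    simp only [Finset.mem_Icc] at hk ⊢
    exact ⟨k / 2, by lia, k / 2 - k, by lia, by lia⟩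
  rw [hr.map_sub a ha b hb, hr.star_apply_eq_inv hb, hr.apply_eq_zpow ha, hr.apply_eq_zpow hb,
    zpow_sub₀ (hr.apply_ne_zero h_one), div_eq_mul_inv]

theorem exists_unitary_zpow (hr : IsTruncatedCharacter B r) :
    ∃ u ∈ unitary G₀, ∀ k ∈ Finset.Icc (-(2 * B : ℤ)) (2 * B), r k = u ^ k := by
  obtain rfl | hB := B.eq_zero_or_pos
  · exact ⟨1, one_mem _, by simpa using hr.map_zero⟩
  · exact ⟨r 1, hr.apply_mem_unitary (by rw [Finset.mem_Icc]; lia),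
      fun _ hk => hr.apply_eq_zpow_of_mem_Icc_two_mul hB hk⟩

end IsTruncatedCharacter

lemma eq_mul_star_mul_of_mul_star_mul_eq {G₀ : Type*} [CommGroupWithZero G₀] [StarMul G₀]
    {a b r s t t' : G₀} (ha : a ≠ 0) (hb : b ≠ 0)
    (h : a * r * star (b * s) * t = a * star b * t') : t' = r * star s * t := by
  have hb_star : star b ≠ 0 := hb.isUnit.star.ne_zero
  refine mul_left_cancel₀ (mul_ne_zero ha hb_star) ?_
  rw [← h, star_mul']
  ac_rfl

/-- The signal-distribution pairs `(x, ρ)` and `(x', ρ')` have the same first and second moments,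
where the signals have angular frequencies `k ∈ [-B, B]` and radial indices `q ∈ S k`. -/
structure HaveSameMoments {G₀ ι : Type*} [Mul G₀] [Star G₀] (B : ℕ) (S : ℤ → Set ι)
    (x : ℤ → ι → G₀) (ρ : ℤ → G₀) (x' : ℤ → ι → G₀) (ρ' : ℤ → G₀) : Prop where
  first : ∀ k ∈ Finset.Icc (-(B : ℤ)) B, ∀ q ∈ S k, x k q * ρ k = x' k q * ρ' k
  second : ∀ k₁ ∈ Finset.Icc (-(B : ℤ)) B, ∀ q₁ ∈ S k₁,
    ∀ k₂ ∈ Finset.Icc (-(B : ℤ)) B, ∀ q₂ ∈ S k₂,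
    x k₁ q₁ * star (x k₂ q₂) * ρ (k₁ - k₂) = x' k₁ q₁ * star (x' k₂ q₂) * ρ' (k₁ - k₂)

namespace HaveSameMoments

variable {G₀ ι : Type*} [CommGroupWithZero G₀] [StarMul G₀] {B : ℕ} {S : ℤ → Set ι}
  {x x' : ℤ → ι → G₀} {ρ ρ' : ℤ → G₀}

lemma signal_eq_mul_div (h : HaveSameMoments B S x ρ x' ρ') {k : ℤ} {q : ι}
    (hρk : ρ k ≠ 0) (hk : k ∈ Finset.Icc (-(B : ℤ)) B) (hq : q ∈ S k) :
    x k q = x' k q * (ρ' k / ρ k) := by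
  rw [← mul_div_assoc]
  exact eq_div_of_mul_eq hρk (h.first k hk q hq)

theorem isTruncatedCharacter_div (h : HaveSameMoments B S x ρ x' ρ')
    (hx : ∀ k ∈ Finset.Icc (-(B : ℤ)) B, ∃ q ∈ S k, x k q ≠ 0)
    (hρ : ∀ k ∈ Finset.Icc (-(2 * B : ℤ)) (2 * B), ρ k ≠ 0) :
    IsTruncatedCharacter B (fun k => ρ' k / ρ k) where
  apply_zero_ne_zero := by
    have h_zero : (0 : ℤ) ∈ Finset.Icc (-(B : ℤ)) B := by simp
    obtain ⟨q, hq, hxq⟩ := hx 0 h_zero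
    rw [h.signal_eq_mul_div (hρ 0 (by simp)) h_zero hq] at hxq
    exact right_ne_zero_of_mul hxq
  map_sub k₁ hk₁ k₂ hk₂ := by
    obtain ⟨q₁, hq₁, hx₁⟩ := hx k₁ hk₁
    obtain ⟨q₂, hq₂, hx₂⟩ := hx k₂ hk₂
    have h_second := h.second k₁ hk₁ q₁ hq₁ k₂ hk₂ q₂ hq₂
    have hρ₁ : ρ k₁ ≠ 0 := hρ k₁ (by rw [Finset.mem_Icc] at hk₁ ⊢; lia)
    have hρ₂ : ρ k₂ ≠ 0 := hρ k₂ (by rw [Finset.mem_Icc] at hk₂ ⊢; lia)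
    have hρ_sub : ρ (k₁ - k₂) ≠ 0 :=
      hρ (k₁ - k₂) (by rw [Finset.mem_Icc] at hk₁ hk₂ ⊢; lia)
    rw [h.signal_eq_mul_div hρ₁ hk₁ hq₁] at hx₁ h_second
    rw [h.signal_eq_mul_div hρ₂ hk₂ hq₂] at hx₂ h_second
    rw [div_eq_iff hρ_sub]
    exact eq_mul_star_mul_of_mul_star_mul_eq (left_ne_zero_of_mul hx₁) (left_ne_zero_of_mul hx₂)
      h_second

end HaveSameMoments

theorem stmt_9_general {G₀ ι : Type*} [CommGroupWithZero G₀] [StarMul G₀] {B : ℕ}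
    {S : ℤ → Set ι} {x x' : ℤ → ι → G₀} {ρ ρ' : ℤ → G₀}
    (hx : ∀ k ∈ Finset.Icc (-(B : ℤ)) B, ∃ q ∈ S k, x k q ≠ 0)
    (hρ : ∀ k ∈ Finset.Icc (-(2 * B : ℤ)) (2 * B), ρ k ≠ 0)
    (h : HaveSameMoments B S x ρ x' ρ') :
    ∃ u ∈ unitary G₀,
      (∀ k ∈ Finset.Icc (-(2 * B : ℤ)) (2 * B), ρ' k = ρ k * u ^ k) ∧
      (∀ k ∈ Finset.Icc (-(B : ℤ)) B, ∀ q ∈ S k, x' k q = x k q * u ^ (-k)) := by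
  obtain ⟨u, hu, hr⟩ := (h.isTruncatedCharacter_div hx hρ).exists_unitary_zpow
  have hu_ne : u ≠ 0 := right_ne_zero_of_mul_eq_one (Unitary.mem_iff.1 hu).1
  refine ⟨u, hu, fun k hk => ?_, fun k hk q hq => ?_⟩
  · rw [← hr k hk, mul_div_cancel₀ _ (hρ k hk)]
  · have hk_two : k ∈ Finset.Icc (-(2 * B : ℤ)) (2 * B) := by
      rw [Finset.mem_Icc] at hk ⊢; lia
    rw [h.signal_eq_mul_div (hρ k hk_two) hk hq, hr k hk_two, zpow_neg,
      mul_inv_cancel_right₀ (zpow_ne_zero k hu_ne)]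

/-- uniqueness, up to a global rotation, of a non-vanishing 2-D signal
(indexed by `I = {(k,q) : -B ≤ k ≤ B, 0 ≤ q ≤ Q_k - 1}`) and non-vanishing distribution
from the first two moments. -/
theorem stmt_9 (B : ℕ) (hB : 1 ≤ B)
    (Q : ℤ → ℕ) (hQ1 : ∀ k, 1 ≤ Q k) (hQsym : ∀ k : ℤ, Q (-k) = Q k)
    (xhat xhat' : ℤ → ℕ → ℂ) (rhohat rhohat' : ℤ → ℂ)
    (hxnv : ∀ k ∈ Finset.Icc (-(B : ℤ)) (B : ℤ), ∀ q ∈ Finset.range (Q k), xhat k q ≠ 0)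
    (hxnv' : ∀ k ∈ Finset.Icc (-(B : ℤ)) (B : ℤ), ∀ q ∈ Finset.range (Q k), xhat' k q ≠ 0)
    (hρnv : ∀ k ∈ Finset.Icc (-(2 * B : ℤ)) (2 * B : ℤ), rhohat k ≠ 0)
    (hρnv' : ∀ k ∈ Finset.Icc (-(2 * B : ℤ)) (2 * B : ℤ), rhohat' k ≠ 0)
    (hρ0 : rhohat 0 = 1 / (2 * π))
    (hρ0' : rhohat' 0 = 1 / (2 * π))
    (hρsym : ∀ k ∈ Finset.Icc (-(2 * B : ℤ)) (2 * B : ℤ), rhohat (-k) = conj (rhohat k))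
    (hρsym' : ∀ k ∈ Finset.Icc (-(2 * B : ℤ)) (2 * B : ℤ), rhohat' (-k) = conj (rhohat' k))
    (hM1 : ∀ k ∈ Finset.Icc (-(B : ℤ)) (B : ℤ), ∀ q ∈ Finset.range (Q k),
      xhat k q * rhohat k = xhat' k q * rhohat' k)
    (hM2 : ∀ k₁ ∈ Finset.Icc (-(B : ℤ)) (B : ℤ), ∀ q₁ ∈ Finset.range (Q k₁),
      ∀ k₂ ∈ Finset.Icc (-(B : ℤ)) (B : ℤ), ∀ q₂ ∈ Finset.range (Q k₂),
      xhat k₁ q₁ * conj (xhat k₂ q₂) * rhohat (k₁ - k₂) =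
        xhat' k₁ q₁ * conj (xhat' k₂ q₂) * rhohat' (k₁ - k₂)) :
    ∃ u : ℂ, ‖u‖ = 1 ∧
      (∀ k ∈ Finset.Icc (-(2 * B : ℤ)) (2 * B : ℤ), rhohat' k = rhohat k * u ^ k) ∧
      (∀ k ∈ Finset.Icc (-(B : ℤ)) (B : ℤ), ∀ q ∈ Finset.range (Q k),
        xhat' k q = xhat k q * u ^ (-k)) := by
  obtain ⟨u, hu, h⟩ := stmt_9_general (S := fun k => Finset.range (Q k))
    (fun k hk => ⟨0, Finset.mem_range.2 (hQ1 k), hxnv k hk 0 (Finset.mem_range.2 (hQ1 k))⟩)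
    hρnv ⟨hM1, hM2⟩
  exact ⟨u, CStarRing.norm_of_mem_unitary hu, h⟩
end

section
/- Let v ∈ ℂⁿ and let V ∈ ℂ^{Q×n} have all Q rows equal to v. Then BC(V) is unitarily diagonalizable and its characteristic polynomial equals λ^{(Q−1)n} · Π_{b=0}^{n−1} ( λ − Q·v̂[b] ), where v̂[b] = Σ_{k=0}^{n−1} v[k]·e^{−ι2πkb/n}. In particular, the nonzero eigenvalues of BC(V) are among the n numbers Q·v̂[b], b = 0,…,n−1, and 0 is an eigenvalue of multiplicity at least (Q−1)n whenever Q ≥ 2. -/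
open Complex Real ComplexConjugate

/-- The block-circulant matrix `BC(V)[(k₁,q₁),(k₂,q₂)] = V[(q₁-q₂) mod Q, (k₁-k₂) mod n]`. -/
noncomputable def BCmat (B Q : ℕ) (V : Matrix (Fin Q) (Fin (2 * B + 1)) ℂ) :
    Matrix (Fin (2 * B + 1) × Fin Q) (Fin (2 * B + 1) × Fin Q) ℂ :=
  Matrix.of fun p₁ p₂ => V (p₁.2 - p₂.2) (p₁.1 - p₂.1)

/-- The DFT `v̂[b] = Σ_{k=0}^{n-1} v[k]·e^{-ι2πkb/n}` of `v ∈ ℂⁿ`, `n = 2B+1`. -/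
noncomputable def vdft (B : ℕ) (v : Fin (2 * B + 1) → ℂ) (b : ℕ) : ℂ :=
  ∑ k : Fin (2 * B + 1),
    v k * Complex.exp (-(((2 * π * ((k : ℕ) : ℝ) * (b : ℝ)) / ((2 * B + 1 : ℕ) : ℝ) : ℝ) : ℂ) *
      Complex.I)

/-!
`BC(V)` is the circulant matrix over the group `ℤ/n × ℤ/Q` of the function `(k, q) ↦ V[q, k]`.
Over any finite abelian group, the characters are eigenvectors of every circulant matrix, the
eigenvalues being the Fourier coefficients of its generator, and the normalized characters are
orthonormal; so every circulant matrix is unitarily diagonalizable. If all rows of `V` equal `v`,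
then `BC(V)` repeats each entry of the circulant matrix `A` of `v` over a `Q × Q` block, and
factors as `L S` through `ℂⁿ` with `S L = Q A`. Since `L S` and `S L` have the same characteristic
polynomial up to a power of `λ`, that of `BC(V)` is `λ^{(Q-1)n}` times that of the circulant
matrix of `Q v`.
-/

open Matrix Polynomial

section Matrices

variable {n κ : Type*} [Fintype n] [DecidableEq n] [Fintype κ]

lemma charpoly_submatrix_fst {R : Type*} [CommRing R] [Nonempty κ] [DecidableEq κ]
    (A : Matrix n n R) :
    (A.submatrix (Prod.fst : n × κ → n) Prod.fst).charpoly =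
      X ^ ((Fintype.card κ - 1) * Fintype.card n) * (Fintype.card κ • A).charpoly := by
  let L : Matrix (n × κ) n R := A.submatrix Prod.fst id
  let S : Matrix n (n × κ) R := (1 : Matrix n n R).submatrix id Prod.fst
  have hLS : A.submatrix Prod.fst Prod.fst = L * S := by
    ext p q
    simp [L, S, mul_apply, one_apply]
  have hSL : S * L = Fintype.card κ • A := by
    ext i j
    simp [L, S, mul_apply, one_apply, Fintype.sum_prod_type]
  have hcard : Fintype.card n ≤ Fintype.card (n × κ) :=
    Fintype.card_le_of_surjective Prod.fst Prod.fst_surjective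
  rw [hLS, charpoly_mul_comm_of_le L S hcard, hSL, Fintype.card_prod, Nat.sub_mul, one_mul,
    mul_comm (Fintype.card n)]

lemma hasEigenvalue_mulVecLin_iff_isRoot_charpoly {K : Type*} [Field K] (A : Matrix n n K)
    (μ : K) :
    Module.End.HasEigenvalue A.mulVecLin μ ↔ A.charpoly.IsRoot μ := by
  rw [Module.End.hasEigenvalue_iff_isRoot_charpoly, charpoly_mulVecLin]

end Matrices

section Circulant

variable {G : Type*} [AddCommGroup G] [Fintype G]

/-- The discrete Fourier transform on a finite abelian group: `groupDFT w ψ` is the Fourier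
coefficient of `w` at the character `ψ`, without normalization. Writing `ψ (-g)` for the conjugate
of `ψ g` makes sense over any commutative semiring. -/
def groupDFT {R : Type*} [CommSemiring R] (w : G → R) (ψ : AddChar G R) : R :=
  ∑ g, w g * ψ (-g)

lemma circulant_mulVec_addChar {R : Type*} [CommSemiring R] (w : G → R) (ψ : AddChar G R) :
    circulant w *ᵥ ψ = groupDFT w ψ • ⇑ψ := by
  ext g
  calc ∑ h, w (g - h) * ψ h = ∑ h, w h * ψ (g - h) := by
        rw [← Equiv.sum_comp (Equiv.subLeft g)]
        simp
    _ = groupDFT w ψ * ψ g := by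
        simp only [groupDFT, Finset.sum_mul, mul_assoc, ← AddChar.map_add_eq_mul, neg_add_eq_sub]

lemma groupDFT_nsmul {R : Type*} [CommSemiring R] (c : ℕ) (w : G → R) (ψ : AddChar G R) :
    groupDFT (c • w) ψ = c * groupDFT w ψ := by
  simp [groupDFT, Finset.mul_sum, mul_assoc]

variable (G) in
/-- The Fourier matrix of a finite abelian group: its columns are the complex characters, divided
by `√|G|` so as to be unit vectors. The columns are indexed by the characters themselves, so the
matrix is square only up to a choice of bijection between `G` and its dual. -/
noncomputable def characterMatrix : Matrix G (AddChar G ℂ) ℂ :=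
  of fun g ψ => ψ g / (√(Fintype.card G) : ℝ)

lemma conjTranspose_characterMatrix_mul_self : (characterMatrix G)ᴴ * characterMatrix G = 1 := by
  ext ψ φ
  have hsqrt : ((√(Fintype.card G) : ℝ) : ℂ) * (√(Fintype.card G) : ℝ) = Fintype.card G := by
    rw [← Complex.ofReal_mul, Real.mul_self_sqrt (Nat.cast_nonneg _), Complex.ofReal_natCast]
  calc ∑ g, star (characterMatrix G g ψ) * characterMatrix G g φ
      = (∑ g, φ g * conj (ψ g)) / Fintype.card G := by
        rw [Finset.sum_div]
        refine Finset.sum_congr rfl fun g _ => ?_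
        simp only [characterMatrix, of_apply, star_div₀, Complex.star_def, Complex.conj_ofReal,
          div_mul_div_comm, hsqrt, mul_comm]
    _ = (1 : Matrix (AddChar G ℂ) (AddChar G ℂ) ℂ) ψ φ := by
        rw [one_apply, ← AddChar.wInner_cWeight_eq_boole, RCLike.wInner_cWeight_eq_expect,
          Fintype.expect_eq_sum_div_card]
        rfl

lemma circulant_mul_characterMatrix (w : G → ℂ) :
    circulant w * characterMatrix G = characterMatrix G * diagonal (groupDFT w) := by
  ext g ψ
  have hψ : ∑ h, circulant w g h * ψ h = groupDFT w ψ * ψ g :=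
    congrFun (circulant_mulVec_addChar w ψ) g
  rw [mul_diagonal, mul_apply]
  simp only [characterMatrix, of_apply, ← mul_div_assoc, ← Finset.sum_div, hψ]
  ring

lemma characterMatrix_mul_conjTranspose_self [DecidableEq G] :
    characterMatrix G * (characterMatrix G)ᴴ = 1 :=
  (mul_eq_one_comm_of_card_eq _ _ _ AddChar.card_eq).mp conjTranspose_characterMatrix_mul_self

theorem circulant_eq_characterMatrix_conj (w : G → ℂ) :
    circulant w = characterMatrix G * diagonal (groupDFT w) * (characterMatrix G)ᴴ := by
  classical
  rw [← circulant_mul_characterMatrix, Matrix.mul_assoc, characterMatrix_mul_conjTranspose_self,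
    Matrix.mul_one]

theorem charpoly_circulant [DecidableEq G] (w : G → ℂ) :
    (circulant w).charpoly = ∏ ψ : AddChar G ℂ, (X - C (groupDFT w ψ)) := by
  rw [circulant_eq_characterMatrix_conj, charpoly_mul_comm_of_le _ _ AddChar.card_eq.le,
    ← Matrix.mul_assoc, conjTranspose_characterMatrix_mul_self, Matrix.one_mul, charpoly_diagonal,
    AddChar.card_eq, Nat.sub_self, pow_zero, one_mul]

theorem exists_unitary_circulant_eq [DecidableEq G] (w : G → ℂ) :
    ∃ U ∈ unitaryGroup G ℂ, ∃ d : G → ℂ, circulant w = U * diagonal d * star U := by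
  have e : G ≃ AddChar G ℂ := Fintype.equivOfCardEq AddChar.card_eq.symm
  refine ⟨(characterMatrix G).submatrix id e, ?_, groupDFT w ∘ e, ?_⟩
  · rw [mem_unitaryGroup_iff, star_eq_conjTranspose, conjTranspose_submatrix, submatrix_mul_equiv,
      characterMatrix_mul_conjTranspose_self, submatrix_id_id]
  · rw [star_eq_conjTranspose, conjTranspose_submatrix, ← submatrix_diagonal_equiv,
      submatrix_mul_equiv, submatrix_mul_equiv, ← circulant_eq_characterMatrix_conj,
      submatrix_id_id]

end Circulant

lemma zmodAddEquiv_apply_apply {n : ℕ} [NeZero n] (x y : ZMod n) :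
    AddChar.zmodAddEquiv x y = Complex.exp ((2 * π * (x.val * y.val / n) : ℝ) * I) := by
  have h := AddChar.zmod_intCast n x.val y.val
  simp only [Int.cast_natCast, ZMod.natCast_zmod_val] at h
  rw [← Circle.coe_exp, ← h]
  rfl

/-- The parametrization of the characters of `Fin (n + 1)` by frequencies: `b` corresponds to
`k ↦ e^{2πi bk/(n+1)}`. It is `AddChar.zmodAddEquiv`, read through the definitional equality of
`ZMod (n + 1)` and `Fin (n + 1)`. -/
noncomputable def finAddCharEquiv (n : ℕ) : Fin (n + 1) ≃ AddChar (Fin (n + 1)) ℂ :=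
  (AddChar.zmodAddEquiv (n := n + 1)).toEquiv

lemma finAddCharEquiv_apply_apply (n : ℕ) (b k : Fin (n + 1)) :
    finAddCharEquiv n b k =
      Complex.exp ((2 * π * ((b : ℕ) * (k : ℕ) / (n + 1 : ℕ)) : ℝ) * I) :=
  zmodAddEquiv_apply_apply (n := n + 1) b k

lemma vdft_eq_groupDFT (B : ℕ) (v : Fin (2 * B + 1) → ℂ) (b : Fin (2 * B + 1)) :
    vdft B v b = groupDFT v (finAddCharEquiv (2 * B) b) := by
  refine Finset.sum_congr rfl fun k _ => ?_
  rw [AddChar.map_neg_eq_inv, finAddCharEquiv_apply_apply, ← Complex.exp_neg]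
  congr 2
  push_cast
  ring

lemma BCmat_eq_circulant (B Q : ℕ) [NeZero Q] (V : Matrix (Fin Q) (Fin (2 * B + 1)) ℂ) :
    BCmat B Q V = circulant fun p => V p.2 p.1 :=
  rfl

theorem charpoly_BCmat_of_rows_eq {B Q : ℕ} [NeZero Q] {v : Fin (2 * B + 1) → ℂ}
    {V : Matrix (Fin Q) (Fin (2 * B + 1)) ℂ} (hV : ∀ q j, V q j = v j) :
    (BCmat B Q V).charpoly = X ^ ((Q - 1) * (2 * B + 1)) *
      ∏ b ∈ Finset.range (2 * B + 1), (X - C ((Q : ℂ) * vdft B v b)) := by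
  have hsub : BCmat B Q V = (circulant v).submatrix Prod.fst Prod.fst := by
    ext p₁ p₂
    exact hV _ _
  have hprod : ∏ ψ, (X - C (groupDFT (Q • v) ψ)) =
      ∏ b ∈ Finset.range (2 * B + 1), (X - C ((Q : ℂ) * vdft B v b)) := by
    rw [← (finAddCharEquiv (2 * B)).prod_comp, Finset.prod_range]
    simp only [groupDFT_nsmul, vdft_eq_groupDFT]
  rw [hsub, charpoly_submatrix_fst, Fintype.card_fin, Fintype.card_fin, ← circulant_smul,
    charpoly_circulant, hprod]

/-- if all `Q` rows of `V` equal `v`, then `BC(V)` is unitarily diagonalizable,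
its characteristic polynomial is `λ^{(Q-1)n}·Π_b (λ - Q·v̂[b])`; in particular every nonzero
eigenvalue is among the `Q·v̂[b]`, and `0` is an eigenvalue of multiplicity at least `(Q-1)n`
whenever `Q ≥ 2`. -/
theorem stmt_11 (B Q : ℕ) (hB : 1 ≤ B) (hQ : 1 ≤ Q)
    (v : Fin (2 * B + 1) → ℂ)
    (V : Matrix (Fin Q) (Fin (2 * B + 1)) ℂ)
    (hV : ∀ (q : Fin Q) (j : Fin (2 * B + 1)), V q j = v j) :
    (∃ U : Matrix (Fin (2 * B + 1) × Fin Q) (Fin (2 * B + 1) × Fin Q) ℂ,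
      U ∈ Matrix.unitaryGroup (Fin (2 * B + 1) × Fin Q) ℂ ∧
      ∃ d : Fin (2 * B + 1) × Fin Q → ℂ,
        BCmat B Q V = U * Matrix.diagonal d * star U) ∧
    (BCmat B Q V).charpoly =
      Polynomial.X ^ ((Q - 1) * (2 * B + 1)) *
        ∏ b ∈ Finset.range (2 * B + 1),
          (Polynomial.X - Polynomial.C ((Q : ℂ) * vdft B v b)) ∧
    (∀ μ : ℂ, μ ≠ 0 → Module.End.HasEigenvalue (Matrix.mulVecLin (BCmat B Q V)) μ →
      ∃ b < 2 * B + 1, μ = (Q : ℂ) * vdft B v b) ∧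
    (2 ≤ Q → Module.End.HasEigenvalue (Matrix.mulVecLin (BCmat B Q V)) 0 ∧
      (Q - 1) * (2 * B + 1) ≤ Polynomial.rootMultiplicity 0 (BCmat B Q V).charpoly) := by
  have : NeZero Q := .of_pos hQ
  have hchar := charpoly_BCmat_of_rows_eq hV
  refine ⟨?_, hchar, fun μ hμ hev => ?_, fun hQ2 => ?_⟩
  · rw [BCmat_eq_circulant]
    exact exists_unitary_circulant_eq _
  · rw [hasEigenvalue_mulVecLin_iff_isRoot_charpoly, hchar] at hev
    simpa [hμ, eval_prod, Finset.prod_eq_zero_iff, sub_eq_zero] using hev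
  · have hne : (BCmat B Q V).charpoly ≠ 0 := (charpoly_monic _).ne_zero
    have hmult : (Q - 1) * (2 * B + 1) ≤ (BCmat B Q V).charpoly.rootMultiplicity 0 := by
      rw [le_rootMultiplicity_iff hne, hchar, C_0, sub_zero]
      exact dvd_mul_right _ _
    have hpos : 0 < (Q - 1) * (2 * B + 1) := Nat.mul_pos (by omega) (by omega)
    refine ⟨?_, hmult⟩
    rw [hasEigenvalue_mulVecLin_iff_isRoot_charpoly]
    exact (rootMultiplicity_pos hne).mp (hpos.trans_le hmult)
end
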